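/- Let f : ℝ^{n×m} → ℝ be differentiable with ∇f Lipschitz continuous with constant L with respect to the Frobenius norm, and let X* ∈ ℝ^{n×m} satisfy ∇f(X*) = 0 and X* = U*(V*)ᵀ for some U* ∈ ℝ^{n×r}, V* ∈ ℝ^{m×r}; set W* = [U*;V*]. Then for any U ∈ ℝ^{n×r}, V ∈ ℝ^{m×r} with W = [U;V], one has ‖∇f(UVᵀ)‖_F ≤ L·(‖W‖_F + ‖W*‖_F)·dist(W,W*). -/

import Mathlib

/-!
Since `∇f(X*) = 0`, the Lipschitz bound gives `‖∇f(UVᵀ)‖ ≤ L ‖UVᵀ - U*V*ᵀ‖`. For every orthogonal `R`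
one has `U*V*ᵀ = (U*R)(V*R)ᵀ`, hence
`UVᵀ - U*V*ᵀ = (U - U*R) Vᵀ + (U*R) (V - V*R)ᵀ`.
Submultiplicativity of the Frobenius norm, its invariance under right multiplication by `R`, and the
fact that a block of a stacked matrix has norm at most that of the whole matrix bound this by
`(‖W‖ + ‖W*‖) ‖W - W*R‖`; taking the infimum over `R` concludes.
-/

open scoped Matrix

attribute [local instance] Matrix.frobeniusNormedAddCommGroup Matrix.frobeniusNormedSpace

/-- The Frobenius inner product `⟨A, B⟩ = trace (Aᵀ B)`. -/
noncomputable def finner {ι κ : Type*} [Fintype ι] [Fintype κ]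
    (A B : Matrix ι κ ℝ) : ℝ :=
  Matrix.trace (Aᵀ * B)

/-- The Frobenius norm. -/
noncomputable def fnorm {ι κ : Type*} [Fintype ι] [Fintype κ]
    (A : Matrix ι κ ℝ) : ℝ :=
  Real.sqrt (finner A A)

/-- `dist(Z¹,Z²) = min_{R ∈ O_r} ‖Z¹ − Z²R‖_F`. -/
noncomputable def mdist {ι : Type*} [Fintype ι] {r : ℕ}
    (Z₁ Z₂ : Matrix ι (Fin r) ℝ) : ℝ :=
  ⨅ R : {R : Matrix (Fin r) (Fin r) ℝ // Rᵀ * R = 1},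
    fnorm (Z₁ - Z₂ * (R : Matrix (Fin r) (Fin r) ℝ))

lemma finner_self_eq_sum {ι κ : Type*} [Fintype ι] [Fintype κ] (A : Matrix ι κ ℝ) :
    finner A A = ∑ i, ∑ j, A i j ^ 2 := by
  simp only [finner, Matrix.trace, Matrix.diag, Matrix.mul_apply, Matrix.transpose_apply, ← pow_two]
  exact Finset.sum_comm

/-- `fnorm` agrees with Mathlib's Frobenius norm, which makes the latter's normed-space API
available. -/
lemma fnorm_eq_norm {ι κ : Type*} [Fintype ι] [Fintype κ] (A : Matrix ι κ ℝ) :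
    fnorm A = ‖A‖ := by
  rw [fnorm, finner_self_eq_sum, Matrix.frobenius_norm_def, Real.sqrt_eq_rpow]
  simp

lemma fnorm_nonneg {ι κ : Type*} [Fintype ι] [Fintype κ] (A : Matrix ι κ ℝ) : 0 ≤ fnorm A :=
  Real.sqrt_nonneg _

lemma fnorm_mul_orthogonal {ι κ : Type*} [Fintype ι] [Fintype κ] [DecidableEq κ]
    (A : Matrix ι κ ℝ) (R : Matrix κ κ ℝ) (hR : R * Rᵀ = 1) : fnorm (A * R) = fnorm A := by
  have h : finner (A * R) (A * R) = finner A A := by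
    rw [finner, finner, Matrix.trace_mul_comm, Matrix.transpose_mul, Matrix.mul_assoc,
      ← Matrix.mul_assoc R, hR, Matrix.one_mul, Matrix.trace_mul_comm]
  rw [fnorm, fnorm, h]

lemma fnorm_le_fromRows_left {ι ι' κ : Type*} [Fintype ι] [Fintype ι'] [Fintype κ]
    (A : Matrix ι κ ℝ) (B : Matrix ι' κ ℝ) : fnorm A ≤ fnorm (Matrix.fromRows A B) := by
  apply Real.sqrt_le_sqrt
  simp only [finner_self_eq_sum, Fintype.sum_sum_type, Matrix.fromRows_apply_inl,
    Matrix.fromRows_apply_inr]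
  exact le_add_of_nonneg_right (by positivity)

lemma fnorm_le_fromRows_right {ι ι' κ : Type*} [Fintype ι] [Fintype ι'] [Fintype κ]
    (A : Matrix ι κ ℝ) (B : Matrix ι' κ ℝ) : fnorm B ≤ fnorm (Matrix.fromRows A B) := by
  apply Real.sqrt_le_sqrt
  simp only [finner_self_eq_sum, Fintype.sum_sum_type, Matrix.fromRows_apply_inl,
    Matrix.fromRows_apply_inr]
  exact le_add_of_nonneg_left (by positivity)

lemma fnorm_mul_transpose_add_le {ι ι' κ : Type*} [Fintype ι] [Fintype ι'] [Fintype κ]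
    (A C : Matrix ι κ ℝ) (B D : Matrix ι' κ ℝ) :
    fnorm (A * Bᵀ + C * Dᵀ) ≤ fnorm A * fnorm B + fnorm C * fnorm D := by
  simp only [fnorm_eq_norm]
  refine (norm_add_le _ _).trans (add_le_add ?_ ?_)
  · simpa using Matrix.frobenius_norm_mul A Bᵀ
  · simpa using Matrix.frobenius_norm_mul C Dᵀ

/-- The bound for one fixed orthogonal alignment `R` of the two factorizations. -/
lemma fnorm_sub_le_of_orthogonal {n m r : ℕ}
    (U Us : Matrix (Fin n) (Fin r) ℝ) (V Vs : Matrix (Fin m) (Fin r) ℝ)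
    (R : Matrix (Fin r) (Fin r) ℝ) (hR : R * Rᵀ = 1) :
    fnorm (U * Vᵀ - Us * Vsᵀ)
      ≤ (fnorm (Matrix.fromRows U V) + fnorm (Matrix.fromRows Us Vs))
          * fnorm (Matrix.fromRows U V - Matrix.fromRows Us Vs * R) := by
  have hsplit : U * Vᵀ - Us * Vsᵀ = (U - Us * R) * Vᵀ + (Us * R) * (V - Vs * R)ᵀ := by
    have h : Us * R * (Rᵀ * Vsᵀ) = Us * Vsᵀ := by
      rw [Matrix.mul_assoc, ← Matrix.mul_assoc R, hR, Matrix.one_mul]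
    rw [Matrix.transpose_sub, Matrix.transpose_mul, Matrix.mul_sub, Matrix.sub_mul, h]
    abel
  have hrows : Matrix.fromRows U V - Matrix.fromRows Us Vs * R
      = Matrix.fromRows (U - Us * R) (V - Vs * R) := by
    rw [Matrix.fromRows_mul]
    ext (i | i) j <;> simp
  rw [hsplit, hrows]
  refine (fnorm_mul_transpose_add_le _ _ _ _).trans ?_
  rw [fnorm_mul_orthogonal Us R hR, add_mul, mul_comm (fnorm (U - Us * R))]
  exact add_le_add
    (mul_le_mul (fnorm_le_fromRows_right U V) (fnorm_le_fromRows_left _ _)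
      (fnorm_nonneg _) (fnorm_nonneg _))
    (mul_le_mul (fnorm_le_fromRows_left Us Vs) (fnorm_le_fromRows_right _ _)
      (fnorm_nonneg _) (fnorm_nonneg _))

theorem stmt6 {n m r : ℕ}
    (f : Matrix (Fin n) (Fin m) ℝ → ℝ) (hdiff : Differentiable ℝ f)
    (gradf : Matrix (Fin n) (Fin m) ℝ → Matrix (Fin n) (Fin m) ℝ)
    (hgradf : ∀ X D, fderiv ℝ f X D = finner (gradf X) D)
    (L : ℝ) (hL : 0 ≤ L)
    (hLip : ∀ X Y : Matrix (Fin n) (Fin m) ℝ, fnorm (gradf X - gradf Y) ≤ L * fnorm (X - Y))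
    (Us : Matrix (Fin n) (Fin r) ℝ) (Vs : Matrix (Fin m) (Fin r) ℝ)
    (Xs : Matrix (Fin n) (Fin m) ℝ) (hXs : Xs = Us * Vsᵀ)
    (hcrit : gradf Xs = 0)
    (U : Matrix (Fin n) (Fin r) ℝ) (V : Matrix (Fin m) (Fin r) ℝ) :
    fnorm (gradf (U * Vᵀ))
      ≤ L * (fnorm (Matrix.fromRows U V) + fnorm (Matrix.fromRows Us Vs))
          * mdist (Matrix.fromRows U V) (Matrix.fromRows Us Vs) := by
  have hgrad : fnorm (gradf (U * Vᵀ)) ≤ L * fnorm (U * Vᵀ - Us * Vsᵀ) := by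
    have h := hLip (U * Vᵀ) Xs
    rwa [hcrit, sub_zero, hXs] at h
  have hc : 0 ≤ L * (fnorm (Matrix.fromRows U V) + fnorm (Matrix.fromRows Us Vs)) :=
    mul_nonneg hL (add_nonneg (fnorm_nonneg _) (fnorm_nonneg _))
  -- The real infimum over an empty type would be the junk value `0`; the identity is orthogonal.
  have : Nonempty {R : Matrix (Fin r) (Fin r) ℝ // Rᵀ * R = 1} := ⟨⟨1, by simp⟩⟩
  rw [mdist, Real.mul_iInf_of_nonneg hc]
  refine le_ciInf fun R => hgrad.trans ?_
  rw [mul_assoc]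
  exact mul_le_mul_of_nonneg_left
    (fnorm_sub_le_of_orthogonal U Us V Vs R (mul_eq_one_comm.mp R.2)) hL
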